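/- Let ψ_α, ψ_β : M_d(ℝ) → ℝ be differentiable, let φ_α, φ_β > 0 with s = φ_α + φ_β, let G be a fixed d×d matrix (collecting F − Σ_{i≠α,β} φ_i F_i) and n̂ ∈ ℝ^d a fixed vector. Define the pairwise interface energy E(a) = (φ_α/s) ψ_α(F_{αβ}(a)) + (φ_β/s) ψ_β(F_{βα}(a)) with F_{αβ}(a) = s⁻¹[G − φ_β (a ⊗ n̂)] and F_{βα}(a) = s⁻¹[G + φ_α (a ⊗ n̂)]. Then E is differentiable and its derivative at a in direction δa equals (φ_α φ_β / s²) · [(P_{βα} − P_{αβ}) n̂] · δa, where P_{αβ} = Dψ_α(F_{αβ}(a)) and P_{βα} = Dψ_β(F_{βα}(a)) are the phase stresses (gradients identified with matrices via the Frobenius inner product). Consequently, a is a critical point of E if and only if P_{αβ} n̂ = P_{βα} n̂, i.e. partial rank-one relaxation of the pairwise energy with respect to the jump vector enforces the static equilibrium (traction continuity) condition on the pairwise interface. -/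

import Mathlib

open Matrix

attribute [local instance] Matrix.normedAddCommGroup Matrix.normedSpace

/-- The Frobenius inner product `⟨A, B⟩ = tr (A Bᵀ)`. -/
noncomputable def frob {d : ℕ} (A B : Matrix (Fin d) (Fin d) ℝ) : ℝ := (A * Bᵀ).trace

/-- The pairwise interface energy
`E(a) = (φ_α/s) ψ_α(s⁻¹[G − φ_β a⊗n̂]) + (φ_β/s) ψ_β(s⁻¹[G + φ_α a⊗n̂])`, `s = φ_α + φ_β`. -/
noncomputable def pairInterfaceEnergy {d : ℕ}
    (ψα ψβ : Matrix (Fin d) (Fin d) ℝ → ℝ) (φα φβ : ℝ)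
    (G : Matrix (Fin d) (Fin d) ℝ) (nh : Fin d → ℝ)
    (a : EuclideanSpace ℝ (Fin d)) : ℝ :=
  (φα / (φα + φβ)) * ψα ((φα + φβ)⁻¹ • (G - φβ • vecMulVec a nh))
    + (φβ / (φα + φβ)) * ψβ ((φα + φβ)⁻¹ • (G + φα • vecMulVec a nh))

/-!
At a fixed weighted sum of the two states, raising the jump `J` by `δJ` moves the first state by
`-(q / (p + q)) • δJ` and the second by `(p / (p + q)) • δJ`. After weighting by `p / (p + q)` and
`q / (p + q)` the two phases contribute with the same factor `p * q / (p + q) ^ 2` and opposite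
signs, so only the stress difference survives. Since `⟨P, δa ⊗ n̂⟩ = (P n̂) · δa`, a rank-one jump
sees this difference only through its traction.
-/

/-- The energy of two phases with weights `p`, `q` whose states differ by the jump `J` and have the
weighted sum `p • F₁ + q • F₂ = G`, as a function of `J`: these constraints (for `p + q ≠ 0`) give
`F₁ = (p + q)⁻¹ • (G - q • J)` and `F₂ = (p + q)⁻¹ • (G + p • J)`. -/
def twoPhaseEnergy {𝕜 V : Type*} [Field 𝕜] [AddCommGroup V] [Module 𝕜 V]
    (ψ₁ ψ₂ : V → 𝕜) (p q : 𝕜) (G J : V) : 𝕜 :=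
  p / (p + q) * ψ₁ ((p + q)⁻¹ • (G - q • J)) + q / (p + q) * ψ₂ ((p + q)⁻¹ • (G + p • J))

theorem hasFDerivAt_twoPhaseEnergy {𝕜 E V : Type*} [NontriviallyNormedField 𝕜]
    [NormedAddCommGroup E] [NormedSpace 𝕜 E] [NormedAddCommGroup V] [NormedSpace 𝕜 V]
    {ψ₁ ψ₂ : V → 𝕜} {ψ₁' ψ₂' : V →L[𝕜] 𝕜} {J : E → V} {J' : E →L[𝕜] V} {p q : 𝕜} {G : V} {x : E}
    (hJ : HasFDerivAt J J' x) (h₁ : HasFDerivAt ψ₁ ψ₁' ((p + q)⁻¹ • (G - q • J x)))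
    (h₂ : HasFDerivAt ψ₂ ψ₂' ((p + q)⁻¹ • (G + p • J x))) :
    HasFDerivAt (fun y => twoPhaseEnergy ψ₁ ψ₂ p q G (J y))
      ((p * q / (p + q) ^ 2) • (ψ₂' ∘L J' - ψ₁' ∘L J')) x := by
  have hF₁ := ((hJ.const_smul q).const_sub G).const_smul (p + q)⁻¹
  have hF₂ := ((hJ.const_smul p).const_add G).const_smul (p + q)⁻¹
  refine (((h₁.comp x hF₁).const_mul (p / (p + q))).add
    ((h₂.comp x hF₂).const_mul (q / (p + q)))).congr_fderiv ?_
  simp only [ContinuousLinearMap.comp_smul, ContinuousLinearMap.comp_neg]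
  -- `(p + q)⁻¹ ^ 2` only normalizes to `((p + q) ^ 2)⁻¹` once `p + q` is an atom
  generalize p + q = s
  module

section RankOneJump

variable {m n : Type*} [Fintype m] [Fintype n]

theorem trace_mul_transpose_vecMulVec {R : Type*} [CommSemiring R]
    (P : Matrix m n R) (a : m → R) (ν : n → R) :
    (P * (vecMulVec a ν)ᵀ).trace = P *ᵥ ν ⬝ᵥ a := by
  rw [transpose_vecMulVec, mul_vecMulVec, trace_vecMulVec]

variable (m) in
/-- The rank-one jump `a ↦ a ⊗ ν` as a continuous linear map of the jump vector `a`. -/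
noncomputable def vecMulVecCLM (ν : n → ℝ) :
    EuclideanSpace ℝ m →L[ℝ] Matrix m n ℝ :=
  LinearMap.toContinuousLinearMap
    ((vecMulVecBilin ℝ ℝ).flip ν ∘ₗ (WithLp.linearEquiv 2 ℝ (m → ℝ)).toLinearMap)

theorem comp_vecMulVecCLM_eq_innerSL {D : Matrix m n ℝ →L[ℝ] ℝ} {P : Matrix m n ℝ}
    (hD : ∀ H, D H = (P * Hᵀ).trace) (ν : n → ℝ) :
    D ∘L vecMulVecCLM m ν = innerSL ℝ (WithLp.toLp 2 (P *ᵥ ν)) := by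
  ext1 a
  calc D (vecMulVec a ν) = P *ᵥ ν ⬝ᵥ a := by rw [hD, trace_mul_transpose_vecMulVec]
    _ = inner ℝ (WithLp.toLp 2 (P *ᵥ ν)) a := by
      rw [EuclideanSpace.inner_eq_star_dotProduct, star_trivial, dotProduct_comm]

theorem sub_comp_vecMulVecCLM_eq_innerSL {D₁ D₂ : Matrix m n ℝ →L[ℝ] ℝ} {P₁ P₂ : Matrix m n ℝ}
    (hD₁ : ∀ H, D₁ H = (P₁ * Hᵀ).trace) (hD₂ : ∀ H, D₂ H = (P₂ * Hᵀ).trace) (ν : n → ℝ) :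
    D₂ ∘L vecMulVecCLM m ν - D₁ ∘L vecMulVecCLM m ν =
      innerSL ℝ (WithLp.toLp 2 ((P₂ - P₁) *ᵥ ν)) := by
  rw [comp_vecMulVecCLM_eq_innerSL hD₁, comp_vecMulVecCLM_eq_innerSL hD₂, ← map_sub,
    ← WithLp.toLp_sub, ← sub_mulVec]

theorem innerSL_toLp_mulVec_sub_eq_zero_iff {P Q : Matrix m n ℝ} {ν : n → ℝ} :
    innerSL ℝ (WithLp.toLp 2 ((Q - P) *ᵥ ν)) = 0 ↔ P *ᵥ ν = Q *ᵥ ν := by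
  rw [← map_zero (innerSL ℝ), innerSL_inj, WithLp.toLp_eq_zero, sub_mulVec, sub_eq_zero, eq_comm]

theorem pairwise_energy_relaxation_static_equilibrium_general
    {ψα ψβ : Matrix m n ℝ → ℝ} {φα φβ : ℝ} (hφα : φα ≠ 0) (hφβ : φβ ≠ 0) (hs : φα + φβ ≠ 0)
    {G : Matrix m n ℝ} {ν : n → ℝ} {a : EuclideanSpace ℝ m} {Pαβ Pβα : Matrix m n ℝ}
    (hψα : DifferentiableAt ℝ ψα ((φα + φβ)⁻¹ • (G - φβ • vecMulVec a ν)))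
    (hψβ : DifferentiableAt ℝ ψβ ((φα + φβ)⁻¹ • (G + φα • vecMulVec a ν)))
    (hPαβ : ∀ H, fderiv ℝ ψα ((φα + φβ)⁻¹ • (G - φβ • vecMulVec a ν)) H = (Pαβ * Hᵀ).trace)
    (hPβα : ∀ H, fderiv ℝ ψβ ((φα + φβ)⁻¹ • (G + φα • vecMulVec a ν)) H = (Pβα * Hᵀ).trace) :
    HasFDerivAt (fun a : EuclideanSpace ℝ m => twoPhaseEnergy ψα ψβ φα φβ G (vecMulVec a ν))
      ((φα * φβ / (φα + φβ) ^ 2) • innerSL ℝ (WithLp.toLp 2 ((Pβα - Pαβ) *ᵥ ν))) a ∧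
    (fderiv ℝ (fun a : EuclideanSpace ℝ m => twoPhaseEnergy ψα ψβ φα φβ G (vecMulVec a ν)) a = 0 ↔
      Pαβ *ᵥ ν = Pβα *ᵥ ν) := by
  have jump_deriv : HasFDerivAt (fun b : EuclideanSpace ℝ m => vecMulVec b ν)
      (vecMulVecCLM m ν) a := (vecMulVecCLM m ν).hasFDerivAt
  have energy_deriv :=
    (hasFDerivAt_twoPhaseEnergy jump_deriv hψα.hasFDerivAt hψβ.hasFDerivAt).congr_fderiv
      (congrArg (_ • ·) (sub_comp_vecMulVecCLM_eq_innerSL hPαβ hPβα ν))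
  refine ⟨energy_deriv, ?_⟩
  have weight_ne_zero : φα * φβ / (φα + φβ) ^ 2 ≠ 0 :=
    div_ne_zero (mul_ne_zero hφα hφβ) (pow_ne_zero 2 hs)
  rw [energy_deriv.fderiv, smul_eq_zero_iff_right weight_ne_zero,
    innerSL_toLp_mulVec_sub_eq_zero_iff]

end RankOneJump

/-- the pairwise interface energy is differentiable in the jump vector `a`,
its derivative in direction `δa` is `(φ_α φ_β / s²) [(P_{βα} − P_{αβ}) n̂] · δa`, and
`a` is a critical point iff the traction continuity `P_{αβ} n̂ = P_{βα} n̂` holds. -/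
theorem pairwise_energy_relaxation_static_equilibrium {d : ℕ}
    (ψα ψβ : Matrix (Fin d) (Fin d) ℝ → ℝ)
    (hψα : Differentiable ℝ ψα) (hψβ : Differentiable ℝ ψβ)
    (φα φβ : ℝ) (hφα : 0 < φα) (hφβ : 0 < φβ)
    (G : Matrix (Fin d) (Fin d) ℝ) (nh : Fin d → ℝ)
    (a : EuclideanSpace ℝ (Fin d))
    (Pαβ Pβα : Matrix (Fin d) (Fin d) ℝ)
    (hPαβ : ∀ H, fderiv ℝ ψα ((φα + φβ)⁻¹ • (G - φβ • vecMulVec a nh)) H = frob Pαβ H)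
    (hPβα : ∀ H, fderiv ℝ ψβ ((φα + φβ)⁻¹ • (G + φα • vecMulVec a nh)) H = frob Pβα H) :
    HasFDerivAt (pairInterfaceEnergy ψα ψβ φα φβ G nh)
      ((φα * φβ / (φα + φβ) ^ 2) •
        innerSL ℝ ((WithLp.equiv 2 (Fin d → ℝ)).symm ((Pβα - Pαβ).mulVec nh))) a ∧
    (fderiv ℝ (pairInterfaceEnergy ψα ψβ φα φβ G nh) a = 0 ↔
      Pαβ.mulVec nh = Pβα.mulVec nh) :=
  pairwise_energy_relaxation_static_equilibrium_general hφα.ne' hφβ.ne' (add_pos hφα hφβ).ne'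
    (hψα _) (hψβ _) hPαβ hPβα
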